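/- arXiv:2212.01926 — 3 statements merged into one kernel-verified Lean document; each statement's English description precedes it below -/
import Mathlib

section
/- Let A be a finite nonempty alphabet, ν a shift-invariant probability measure on A^ℕ, and for 1 ≤ ℓ ≤ h let Q_ℓ be the memory-ℓ Markov model word probability on A^{h+1} built from ν, namely Q_ℓ(w) = ν[w_0…w_{ℓ-1}] · ∏_{k=0}^{h-ℓ} ν[w_k…w_{k+ℓ}] / ν[w_k…w_{k+ℓ-1}] (and 0 if some denominator vanishes). Then for all 1 ≤ ℓ < ℓ' ≤ h and every w ∈ A^{h+1}, Q_{ℓ'}(w) > 0 implies Q_ℓ(w) > 0. Consequently the h-step behaviour of the memory-ℓ' model is contained in that of the memory-ℓ model, and the behavioural metric d_h(Σ_ℓ, Σ_{ℓ'}) reduces to the single term Q_ℓ({w : Q_ℓ(w) > 0 and Q_{ℓ'}(w) = 0}). -/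
open scoped Classical ENNReal
open MeasureTheory

/-- The measure of the length-`m` cylinder determined by the word `u` (only its first `m`
letters matter). -/
noncomputable def cylMeas {A : Type} [MeasurableSpace A]
    (ν : Measure (ℕ → A)) (m : ℕ) (u : ℕ → A) : ℝ≥0∞ :=
  ν {ω : ℕ → A | ∀ i < m, ω i = u i}

/-- The memory-`ℓ` Markov model word probability of a length-`h+1` word `w` built from the
stationary output process `ν`:
`Q_ℓ(w) = ν[w_0…w_{ℓ-1}] · ∏_{k=0}^{h-ℓ} ν[w_k…w_{k+ℓ}] / ν[w_k…w_{k+ℓ-1}]`,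
set to `0` whenever some factor's denominator vanishes. -/
noncomputable def memQ {A : Type} [MeasurableSpace A]
    (ν : Measure (ℕ → A)) (ℓ h : ℕ) (w : ℕ → A) : ℝ≥0∞ :=
  if ∀ k ≤ h - ℓ, cylMeas ν ℓ (fun i => w (k + i)) ≠ 0 then
    cylMeas ν ℓ w * ∏ k ∈ Finset.range (h - ℓ + 1),
      cylMeas ν (ℓ + 1) (fun i => w (k + i)) / cylMeas ν ℓ (fun i => w (k + i))
  else 0

lemma cylMeas_succ_le {A : Type} [MeasurableSpace A] (ν : Measure (ℕ → A))
    (hshift : ν.map (fun ω n => ω (n + 1)) = ν) (m : ℕ) (u : ℕ → A) :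
    cylMeas ν (m + 1) u ≤ cylMeas ν m (fun i => u (i + 1)) := by
  have hm : Measurable (fun (ω : ℕ → A) n => ω (n + 1)) :=
    measurable_pi_lambda _ fun n => measurable_pi_apply (n + 1)
  have h1 := Measure.le_map_apply (μ := ν) hm.aemeasurable
    {ω : ℕ → A | ∀ i < m, ω i = u (i + 1)}
  rw [hshift] at h1
  refine le_trans (measure_mono ?_) h1
  intro ω hω i hi
  exact hω (i + 1) (by omega)

lemma cylMeas_sub_le {A : Type} [MeasurableSpace A] (ν : Measure (ℕ → A))
    (hshift : ν.map (fun ω n => ω (n + 1)) = ν) (d n : ℕ) :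
    ∀ (m : ℕ) (u : ℕ → A), d + n ≤ m → cylMeas ν m u ≤ cylMeas ν n (fun i => u (d + i)) := by
  induction d with
  | zero =>
    intro m u hm
    refine measure_mono ?_
    intro ω hω i hi
    simpa using hω i (by omega)
  | succ d ih =>
    intro m u hm
    obtain ⟨m, rfl⟩ : ∃ m', m = m' + 1 := ⟨m - 1, by omega⟩
    refine (cylMeas_succ_le ν hshift m u).trans ?_
    refine (ih m (fun i => u (i + 1)) (by omega)).trans (le_of_eq ?_)
    congr 1
    funext i
    congr 1
    omega

lemma memQ_pos_iff {A : Type} [MeasurableSpace A] (ν : Measure (ℕ → A)) [IsProbabilityMeasure ν]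
    (hshift : ν.map (fun ω n => ω (n + 1)) = ν) (l h : ℕ) (w : ℕ → A) :
    0 < memQ ν l h w ↔ ∀ k ≤ h - l, cylMeas ν (l + 1) (fun i => w (k + i)) ≠ 0 := by
  have hle : ∀ k, cylMeas ν (l + 1) (fun i => w (k + i)) ≤ cylMeas ν l (fun i => w (k + i)) := by
    intro k
    have := cylMeas_sub_le ν hshift 0 l (l + 1) (fun i => w (k + i)) (by omega)
    simpa using this
  unfold memQ
  constructor
  · intro hp k hk h0
    split_ifs at hp with hc
    · rw [Finset.prod_eq_zero (i := k) (Finset.mem_range.2 (by omega)) (by rw [h0]; simp)] at hp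
      simp at hp
    · simp at hp
  · intro hp
    have hc : ∀ k ≤ h - l, cylMeas ν l (fun i => w (k + i)) ≠ 0 := by
      intro k hk h0
      exact hp k hk (le_antisymm ((hle k).trans h0.le) bot_le)
    rw [if_pos hc, pos_iff_ne_zero]
    refine mul_ne_zero ?_ (Finset.prod_ne_zero_iff.2 ?_)
    · simpa using hc 0 (by omega)
    · intro k hk
      exact ENNReal.div_ne_zero.2 ⟨hp k (by have := Finset.mem_range.1 hk; omega),
        measure_ne_top ν _⟩

/-- For a shift-invariant probability measure `ν` on `A^ℕ` and memories
`1 ≤ ℓ < ℓ' ≤ h`, every length-`h+1` word with positive memory-`ℓ'` model probability also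
has positive memory-`ℓ` model probability; hence the `h`-step behaviour of the memory-`ℓ'`
model is contained in that of the memory-`ℓ` model and the behavioural metric
`d_h(Σ_ℓ, Σ_{ℓ'})` reduces to the single term `Q_ℓ({w : Q_ℓ(w) > 0 ∧ Q_{ℓ'}(w) = 0})`. -/
theorem stmt2 (A : Type) [Fintype A] [Nonempty A]
    [MeasurableSpace A] [MeasurableSingletonClass A]
    (ν : Measure (ℕ → A)) [IsProbabilityMeasure ν]
    (hshift : ν.map (fun ω n => ω (n + 1)) = ν)
    (ℓ ℓ' h : ℕ) (hℓ : 1 ≤ ℓ) (hℓℓ' : ℓ < ℓ') (hℓ'h : ℓ' ≤ h) :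
    (∀ w : ℕ → A, 0 < memQ ν ℓ' h w → 0 < memQ ν ℓ h w) ∧
    {w : ℕ → A | 0 < memQ ν ℓ' h w} ⊆ {w : ℕ → A | 0 < memQ ν ℓ h w} ∧
    ∀ ext : (Fin (h + 1) → A) → (ℕ → A),
      (ext = fun w i => if hi : i < h + 1 then w ⟨i, hi⟩ else w ⟨0, Nat.succ_pos h⟩) →
      (∑ w : Fin (h + 1) → A,
          if 0 < memQ ν ℓ h (ext w) ∧ memQ ν ℓ' h (ext w) = 0 then memQ ν ℓ h (ext w) else 0) +
        (∑ w : Fin (h + 1) → A,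
          if 0 < memQ ν ℓ' h (ext w) ∧ memQ ν ℓ h (ext w) = 0 then memQ ν ℓ' h (ext w) else 0) =
      ∑ w : Fin (h + 1) → A,
          if 0 < memQ ν ℓ h (ext w) ∧ memQ ν ℓ' h (ext w) = 0 then memQ ν ℓ h (ext w) else 0 := by
  have key : ∀ w : ℕ → A, 0 < memQ ν ℓ' h w → 0 < memQ ν ℓ h w := by
    intro w hw
    rw [memQ_pos_iff ν hshift] at hw ⊢
    intro k hk h0
    refine hw (min k (h - ℓ')) (min_le_right _ _) ?_
    have h1 := cylMeas_sub_le ν hshift (k - min k (h - ℓ')) (ℓ + 1) (ℓ' + 1)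
      (fun i => w (min k (h - ℓ') + i)) (by omega)
    have h2 : (fun i => w (min k (h - ℓ') + (k - min k (h - ℓ') + i))) = fun i => w (k + i) := by
      funext i
      congr 1
      omega
    rw [h2, h0] at h1
    exact le_antisymm h1 bot_le
  refine ⟨key, fun w hw => key w hw, ?_⟩
  intro ext _
  have hz : (∑ w : Fin (h + 1) → A,
      if 0 < memQ ν ℓ' h (ext w) ∧ memQ ν ℓ h (ext w) = 0 then memQ ν ℓ' h (ext w) else 0) = 0 := by
    refine Finset.sum_eq_zero fun w _ => if_neg ?_
    rintro ⟨h1, h2⟩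
    exact (key _ h1).ne' h2
  rw [hz, add_zero]
end

section
/- Let X be a separable metric space equipped with its Borel σ-algebra, let P and P' be probability measures on X, and let C_1, …, C_m be a finite Borel partition of X such that P(C_i) = P'(C_i) for every i and each C_i is bounded. Then there exists a probability measure γ on X × X whose first marginal is P and whose second marginal is P', such that γ(⋃_{i=1}^m C_i × C_i) = 1; in particular, for γ-almost every pair (x, x'), dist(x, x') ≤ max_{1 ≤ i ≤ m} diam(C_i). Hence a random point distributed as P' can be written as a random point distributed as P plus a perturbation of norm at most the largest cell diameter. -/
open MeasureTheory

/-- Let `X` be a separable metric space with its Borel σ-algebra, `P` and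
`P'` probability measures on `X`, and `C_1, …, C_m` a finite Borel partition of `X` into
bounded cells with `P(C_i) = P'(C_i)` for every `i`. Then there is a coupling `γ` of `P`
and `P'` concentrated on `⋃_i C_i × C_i`; in particular `γ`-almost every pair `(x, x')`
satisfies `dist(x, x') ≤ max_i diam(C_i)`, i.e. a random point distributed as `P'` is a
random point distributed as `P` plus a perturbation of norm at most the largest cell
diameter. -/
theorem stmt6 (X : Type) [MetricSpace X] [TopologicalSpace.SeparableSpace X]
    [MeasurableSpace X] [BorelSpace X]
    (P P' : Measure X) [IsProbabilityMeasure P] [IsProbabilityMeasure P']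
    (m : ℕ) (C : Fin m → Set X)
    (hmeas : ∀ i, MeasurableSet (C i))
    (hdisj : Pairwise (Function.onFun Disjoint C))
    (hcover : ⋃ i, C i = Set.univ)
    (hbdd : ∀ i, Bornology.IsBounded (C i))
    (heq : ∀ i, P (C i) = P' (C i)) :
    ∃ γ : Measure (X × X), IsProbabilityMeasure γ ∧
      γ.map Prod.fst = P ∧ γ.map Prod.snd = P' ∧
      γ (⋃ i, C i ×ˢ C i) = 1 ∧
      ∀ᵐ p ∂γ, dist p.1 p.2 ≤ ⨆ i, Metric.diam (C i) := by
  have hfin : ∀ i, P (C i) ≠ ⊤ := fun i => measure_ne_top _ _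
  set γ : Measure (X × X) :=
    Measure.sum fun i => (P (C i))⁻¹ • (P.restrict (C i)).prod (P'.restrict (C i)) with hγ
  have h1 : γ.map Prod.fst = P := by
    rw [hγ, Measure.map_sum measurable_fst.aemeasurable]
    conv_rhs => rw [← Measure.restrict_univ (μ := P), ← hcover,
      Measure.restrict_iUnion hdisj hmeas]
    congr 1
    funext i
    rw [Measure.map_smul, Measure.map_fst_prod, Measure.restrict_apply_univ, ← heq i, smul_smul]
    by_cases h0 : P (C i) = 0
    · rw [Measure.restrict_eq_zero.mpr h0, smul_zero]
    · rw [ENNReal.inv_mul_cancel h0 (hfin i), one_smul]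
  have h2 : γ.map Prod.snd = P' := by
    rw [hγ, Measure.map_sum measurable_snd.aemeasurable]
    conv_rhs => rw [← Measure.restrict_univ (μ := P'), ← hcover,
      Measure.restrict_iUnion hdisj hmeas]
    congr 1
    funext i
    rw [Measure.map_smul, Measure.map_snd_prod, Measure.restrict_apply_univ, smul_smul]
    by_cases h0 : P (C i) = 0
    · rw [Measure.restrict_eq_zero.mpr ((heq i).symm.trans h0), smul_zero]
    · rw [ENNReal.inv_mul_cancel h0 (hfin i), one_smul]
  have hprob : IsProbabilityMeasure γ := by
    constructor
    have h := measure_univ (μ := P)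
    rwa [← h1, Measure.map_apply measurable_fst MeasurableSet.univ, Set.preimage_univ] at h
  have hae : ∀ᵐ p ∂γ, p ∈ ⋃ i, C i ×ˢ C i := by
    rw [hγ, Measure.ae_sum_iff]
    intro i
    apply Measure.ae_smul_measure
    rw [Measure.prod_restrict]
    filter_upwards [ae_restrict_mem ((hmeas i).prod (hmeas i))] with p hp
    exact Set.mem_iUnion.mpr ⟨i, hp⟩
  refine ⟨γ, hprob, h1, h2, ?_, ?_⟩
  · rw [measure_eq_measure_of_null_diff (Set.subset_univ _), measure_univ]
    rw [← Set.compl_eq_univ_diff]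
    exact hae
  · filter_upwards [hae] with p hp
    obtain ⟨i, hi⟩ := Set.mem_iUnion.mp hp
    exact (Metric.dist_le_diam_of_mem (hbdd i) hi.1 hi.2).trans
      (le_ciSup (f := fun i => Metric.diam (C i)) (Set.finite_range _).bddAbove i)
end

section
/- Let θ ∈ (0, 2π) be such that θ/(2π) is irrational, and consider the Sturmian system on [0, 2π) given by F(x) = x + θ (mod 2π), with output map H(x) = 0 if x ∈ [0, θ) and H(x) = 1 otherwise. If two points x, x' ∈ [0, 2π) produce identical output sequences, i.e. H(F^i(x)) = H(F^i(x')) for all i ∈ ℕ, then x = x'. In particular dist(F^l(x), F^l(x')) → 0 as l → ∞, so the Sturmian system is observable. -/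
open Filter

lemma orbit_dense (θ : ℝ) (hirr : Irrational (θ / (2 * Real.pi))) (x a b : ℝ) (hab : a < b) :
    ∃ (n : ℕ) (z : ℤ) (y : ℝ), y ∈ Set.Ioo a b ∧ x + n * θ = y + z * (2 * Real.pi) := by
  have : Fact (0 < 2 * Real.pi) := ⟨Real.two_pi_pos⟩
  have h1 : DenseRange (fun n : ℕ => n • (θ : AddCircle (2 * Real.pi))) :=
    denseRange_zsmul_iff_nsmul.1 (AddCircle.denseRange_zsmul_coe_iff.2 hirr)
  have hop : IsOpen ((fun t : ℝ => (t : AddCircle (2 * Real.pi))) '' Set.Ioo (a - x) (b - x)) :=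
    QuotientAddGroup.isOpenMap_coe _ isOpen_Ioo
  obtain ⟨n, t, ht, hn⟩ := h1.exists_mem_open hop
    ((Set.nonempty_Ioo.2 (by linarith)).image _)
  have hn' : ((t : ℝ) : AddCircle (2 * Real.pi)) = ((n * θ : ℝ) : AddCircle (2 * Real.pi)) := by
    rw [← nsmul_eq_mul, AddCircle.coe_nsmul]; exact hn
  rw [eq_comm, ← sub_eq_zero, ← AddCircle.coe_sub, AddCircle.coe_eq_zero_iff] at hn'
  obtain ⟨m, hm⟩ := hn'
  refine ⟨n, m, x + t, ⟨by linarith [ht.1], by linarith [ht.2]⟩, ?_⟩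
  rw [zsmul_eq_mul] at hm
  linarith

lemma iter_eq (θ : ℝ) (F : ℝ → ℝ) (hF : ∀ x, F x = toIcoMod Real.two_pi_pos 0 (x + θ))
    (x : ℝ) (hx : x ∈ Set.Ico 0 (2 * Real.pi)) (n : ℕ) :
    F^[n] x = toIcoMod Real.two_pi_pos 0 (x + n * θ) := by
  induction n with
  | zero =>
    symm
    simpa [toIcoMod_eq_self] using hx
  | succ k ih =>
    rw [Function.iterate_succ_apply', ih, hF, ← self_sub_toIcoDiv_zsmul _ _ (x + k * θ), sub_add_eq_add_sub,
      toIcoMod_sub_zsmul]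
    congr 1
    push_cast
    ring

lemma sep (θ : ℝ) (hθ : θ ∈ Set.Ioo 0 (2 * Real.pi))
    (hirr : Irrational (θ / (2 * Real.pi)))
    (F : ℝ → ℝ) (hF : ∀ x, F x = toIcoMod Real.two_pi_pos 0 (x + θ))
    (H : ℝ → ℕ) (hH : ∀ x, H x = if x ∈ Set.Ico 0 θ then 0 else 1)
    (x x' : ℝ) (hx : x ∈ Set.Ico 0 (2 * Real.pi)) (hx' : x' ∈ Set.Ico 0 (2 * Real.pi))
    (hout : ∀ i : ℕ, H (F^[i] x) = H (F^[i] x')) : ¬ x < x' := by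
  intro hlt
  obtain ⟨h0, h2⟩ := hθ
  have key : ∀ (u c : ℝ) (n : ℕ) (z : ℤ), u ∈ Set.Ico 0 (2 * Real.pi) →
      c ∈ Set.Ico 0 (2 * Real.pi) →
      u + n * θ = c + z * (2 * Real.pi) → F^[n] u = c := by
    intro u c n z hu hc h
    rw [iter_eq θ F hF u hu, toIcoMod_eq_iff]
    exact ⟨by simpa using hc, z, by simpa using h⟩
  obtain ⟨hx1, hx2⟩ := hx
  obtain ⟨hx1', hx2'⟩ := hx'
  rcases le_or_gt (x' - x) θ with hd | hd
  · obtain ⟨n, z, y, ⟨hy1, hy2⟩, h⟩ := orbit_dense θ hirr x (max (2 * Real.pi - (x' - x)) θ)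
      (2 * Real.pi) (max_lt (by linarith) h2)
    obtain ⟨hy3, hy4⟩ := max_lt_iff.1 hy1
    have e := hout n
    rw [key x y n z ⟨hx1, hx2⟩ ⟨by linarith, hy2⟩ h,
      key x' (y + (x' - x) - 2 * Real.pi) n (z + 1) ⟨hx1', hx2'⟩ ⟨by linarith, by linarith⟩
        (by push_cast; linarith), hH, hH, if_neg (fun q => by linarith [q.2]),
      if_pos ⟨by linarith, by linarith⟩] at e
    omega
  · obtain ⟨n, z, y, ⟨hy1, hy2⟩, h⟩ := orbit_dense θ hirr x 0
      (min θ (2 * Real.pi - (x' - x))) (lt_min h0 (by linarith))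
    obtain ⟨hy3, hy4⟩ := lt_min_iff.1 hy2
    have e := hout n
    rw [key x y n z ⟨hx1, hx2⟩ ⟨by linarith, by linarith⟩ h,
      key x' (y + (x' - x)) n z ⟨hx1', hx2'⟩ ⟨by linarith, by linarith⟩
        (by linarith), hH, hH, if_pos ⟨by linarith, by linarith⟩,
      if_neg (fun q => by linarith [q.2])] at e
    omega

/-- The Sturmian system on `[0, 2π)` given by the irrational rotation
`F(x) = x + θ (mod 2π)` with output map `H(x) = 0` if `x ∈ [0, θ)` and `H(x) = 1`
otherwise (where `θ ∈ (0, 2π)` and `θ/(2π)` is irrational) is observable: any two points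
`x, x' ∈ [0, 2π)` producing identical output sequences are equal, and in particular
`dist(F^l(x), F^l(x')) → 0` as `l → ∞`. -/
theorem stmt10 (θ : ℝ) (hθ : θ ∈ Set.Ioo 0 (2 * Real.pi))
    (hirr : Irrational (θ / (2 * Real.pi)))
    (F : ℝ → ℝ) (hF : ∀ x, F x = toIcoMod Real.two_pi_pos 0 (x + θ))
    (H : ℝ → ℕ) (hH : ∀ x, H x = if x ∈ Set.Ico 0 θ then 0 else 1)
    (x x' : ℝ) (hx : x ∈ Set.Ico 0 (2 * Real.pi)) (hx' : x' ∈ Set.Ico 0 (2 * Real.pi))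
    (hout : ∀ i : ℕ, H (F^[i] x) = H (F^[i] x')) :
    x = x' ∧
    Tendsto (fun l : ℕ => dist (F^[l] x) (F^[l] x')) atTop (nhds 0) := by
  have h : x = x' := le_antisymm
    (not_lt.1 (sep θ hθ hirr F hF H hH x' x hx' hx (fun i => (hout i).symm)))
    (not_lt.1 (sep θ hθ hirr F hF H hH x x' hx hx' hout))
  subst h
  exact ⟨rfl, by simp⟩
end
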